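/- For every n ≥ 0, the number of nonzero entries on row n of Pascal's triangle modulo 9 satisfies, as an identity in the rational numbers, a_9(n) = 2^{|n|_1} · 3^{|n|_2} · (1 + |n|_{10} + (1/4)|n|_{11} + (4/3)|n|_{20} + (1/3)|n|_{21}), where subword counts are taken in the base-3 representation of n. -/

import Mathlib

/-- The number of integers `0 ≤ m ≤ n` such that `C(n,m)` is not divisible by `k`,
i.e. the number of nonzero entries on row `n` of Pascal's triangle modulo `k`. -/
def rowCount (k n : ℕ) : ℕ :=
  ((Finset.range (n + 1)).filter fun m => ¬ k ∣ n.choose m).card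

/-- The number of borrows when subtracting `m` from `n` in base `b` (for `m ≤ n`):
the number of indices `i ≥ 0` with `m mod b^(i+1) > n mod b^(i+1)`. -/
def borrowCount (b n m : ℕ) : ℕ :=
  ((Finset.range (Nat.digits b n).length).filter fun i => n % b ^ (i + 1) < m % b ^ (i + 1)).card

/-- `A_n(β)`: the number of `0 ≤ m ≤ n` with exactly `β` borrows
when subtracting `m` from `n` in base `b`. -/
def borrowA (b n β : ℕ) : ℕ :=
  ((Finset.range (n + 1)).filter fun m => borrowCount b n m = β).card

/-- `B_n(β)` with respect to `L` digit positions: the number of `n < m ≤ b^L - 1` such that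
exactly `β` of the indices `0 ≤ i ≤ L - 1` satisfy `m mod b^(i+1) > n mod b^(i+1)`. -/
def borrowB (b L n β : ℕ) : ℕ :=
  ((Finset.Ioc n (b ^ L - 1)).filter fun m =>
    ((Finset.range L).filter fun i => n % b ^ (i + 1) < m % b ^ (i + 1)).card = β).card

/-- The base-`b` digit string of `n`, most significant digit first (empty for `n = 0`). -/
def wordOf (b n : ℕ) : List ℕ := (Nat.digits b n).reverse

/-- `|n|_w`: the number of occurrences of `w` as a contiguous subword of the
base-`b` digit string of `n`. -/
def subwordCount (b n : ℕ) (w : List ℕ) : ℕ :=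
  ((Finset.range ((wordOf b n).length + 1 - w.length)).filter fun s =>
    ((wordOf b n).drop s).take w.length = w).card

/-- `c(w_k ⋯ w_0)` for a word `w = [w_k, …, w_0]` (most significant letter first):
`(w_k/(w_k+1)) · (∏_{h=1}^{k−1} (b−w_{k−h})/(w_{k−h}+1)) · (b−w_0−1)/(w_0+1)`. -/
def cword (b : ℕ) (w : List ℕ) : ℚ :=
  ((w.getD 0 0 : ℚ) / ((w.getD 0 0 : ℚ) + 1)) *
    (∏ h ∈ Finset.Ico 1 (w.length - 1),
      ((b : ℚ) - (w.getD h 0 : ℚ)) / ((w.getD h 0 : ℚ) + 1)) *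
    (((b : ℚ) - (w.getD (w.length - 1) 0 : ℚ) - 1) / ((w.getD (w.length - 1) 0 : ℚ) + 1))

/-- The sum `Σ c(v)c(w)⋯c(z)` over all sets of pairwise nonoverlapping contiguous subwords
of `W` (identified by their position intervals: a pair `(s, len)` denotes the subword
occupying positions `s, …, s+len-1`) whose multiset of lengths equals `P`. -/
def nonoverlapSum (b : ℕ) (W : List ℕ) (P : Multiset ℕ) : ℚ :=
  ∑ S ∈ ((Finset.range W.length ×ˢ Finset.Icc 1 W.length).powerset.filter fun S =>
      Multiset.map Prod.snd S.val = P ∧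
      (∀ q ∈ S, q.1 + q.2 ≤ W.length) ∧
      (∀ q ∈ S, ∀ r ∈ S, q ≠ r → q.1 + q.2 ≤ r.1 ∨ r.1 + r.2 ≤ q.1)),
    ∏ q ∈ S, cword b ((W.drop q.1).take q.2)

/-!
Write `n = p * q + r` with last base-`p` digit `r`. Subtracting `p * m + s` from `n` borrows from
`q` exactly when `r < s`. By Legendre's formula, `C(n, p * m + s)` has the same `p`-adic valuation
as `C(q, m)` if there is no borrow, and as `p * q * C(q - 1, m)` if there is one.
Counting over the `p` residues `s` gives a recursion for the number of entries not divisible by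
`p ^ (k + 1)`. For `k = 0` the borrowing entries vanish modulo `p`, whence Fine's product
`∏ (digit + 1)`. For `k = 1` they contribute
`(p - 1 - r) * u / (u + 1) * ∏ (digit of q + 1)`, where `u` is the last digit of `q`; relative to
the new product this is the weight `c(ur)` of the two-letter subword completed by `r`.
-/

section Valuation

variable {p : ℕ} [Fact p.Prime]

theorem padicValNat_factorial_mul_add_eq_add (m : ℕ) {r : ℕ} (hr : r < p) :
    padicValNat p (p * m + r).factorial = padicValNat p m.factorial + m := by
  rw [padicValNat_factorial_mul_add m hr, padicValNat_factorial_mul]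

theorem padicValNat_add_choose_add_factorial (i j : ℕ) :
    padicValNat p ((i + j).choose i) + padicValNat p i.factorial + padicValNat p j.factorial =
      padicValNat p (i + j).factorial := by
  have choose_ne_zero : (i + j).choose i ≠ 0 := (Nat.choose_pos (Nat.le_add_right i j)).ne'
  rw [← Nat.add_choose_mul_factorial_mul_factorial i j, ← Nat.choose_symm_add,
    padicValNat.mul (mul_ne_zero choose_ne_zero i.factorial_ne_zero) j.factorial_ne_zero,
    padicValNat.mul choose_ne_zero i.factorial_ne_zero]

theorem padicValNat_choose_of_no_borrow {q m r s : ℕ} (hr : r < p) (hs : s ≤ r) (hm : m ≤ q) :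
    padicValNat p ((p * q + r).choose (p * m + s)) = padicValNat p (q.choose m) := by
  obtain ⟨d, rfl⟩ := Nat.exists_eq_add_of_le hm
  obtain ⟨e, rfl⟩ := Nat.exists_eq_add_of_le hs
  have val_upper := padicValNat_add_choose_add_factorial (p := p) (p * m + s) (p * d + e)
  rw [show p * m + s + (p * d + e) = p * (m + d) + (s + e) by ring,
    padicValNat_factorial_mul_add_eq_add _ hr, padicValNat_factorial_mul_add_eq_add m (by omega),
    padicValNat_factorial_mul_add_eq_add d (by omega)] at val_upper
  have val_lower := padicValNat_add_choose_add_factorial (p := p) m d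
  omega

theorem padicValNat_choose_of_borrow {q m r s : ℕ} (hs : s < p) (hr : r < s) (hm : m ≤ q) :
    padicValNat p ((p * (q + 1) + r).choose (p * m + s)) =
      padicValNat p ((q + 1) * q.choose m) + 1 := by
  obtain ⟨d, rfl⟩ := Nat.exists_eq_add_of_le hm
  obtain ⟨e, he⟩ := Nat.exists_eq_add_of_le (show s ≤ p + r by omega)
  have val_upper := padicValNat_add_choose_add_factorial (p := p) (p * m + s) (p * d + e)
  rw [show p * m + s + (p * d + e) = p * (m + d + 1) + r by linarith,
    padicValNat_factorial_mul_add_eq_add _ (hr.trans hs), padicValNat_factorial_mul_add_eq_add m hs,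
    padicValNat_factorial_mul_add_eq_add d (by omega), Nat.factorial_succ,
    padicValNat.mul (Nat.succ_ne_zero _) (Nat.factorial_ne_zero _)] at val_upper
  have val_lower := padicValNat_add_choose_add_factorial (p := p) m d
  rw [padicValNat.mul (Nat.succ_ne_zero _) (Nat.choose_pos hm).ne']
  omega

theorem pow_dvd_choose_iff_of_no_borrow (k q m : ℕ) {r s : ℕ} (hr : r < p) (hs : s ≤ r) :
    p ^ k ∣ (p * q + r).choose (p * m + s) ↔ p ^ k ∣ q.choose m := by
  rcases le_or_gt m q with hm | hm
  · have hle : p * m + s ≤ p * q + r := by gcongr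
    rw [padicValNat_dvd_iff_le (Nat.choose_pos hle).ne',
      padicValNat_dvd_iff_le (Nat.choose_pos hm).ne', padicValNat_choose_of_no_borrow hr hs hm]
  · have hlt : p * q + r < p * m + s := by nlinarith
    rw [Nat.choose_eq_zero_of_lt hlt, Nat.choose_eq_zero_of_lt hm]

theorem pow_succ_dvd_choose_iff_of_borrow (k q m : ℕ) {r s : ℕ} (hs : s < p) (hr : r < s) :
    p ^ (k + 1) ∣ (p * q + r).choose (p * m + s) ↔ p ^ k ∣ q * (q - 1).choose m := by
  rcases lt_or_ge m q with hm | hm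
  · obtain ⟨q, rfl⟩ := Nat.exists_eq_add_one_of_ne_zero (Nat.ne_zero_of_lt hm)
    have hmq : m ≤ q := Nat.le_of_lt_succ hm
    have hle : p * m + s ≤ p * (q + 1) + r := by nlinarith
    rw [Nat.add_sub_cancel, padicValNat_dvd_iff_le (Nat.choose_pos hle).ne',
      padicValNat_dvd_iff_le (mul_ne_zero q.succ_ne_zero (Nat.choose_pos hmq).ne'),
      padicValNat_choose_of_borrow hs hr hmq, Nat.add_le_add_iff_right]
  · have hlt : p * q + r < p * m + s := by nlinarith
    have hzero : q * (q - 1).choose m = 0 := by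
      rcases q.eq_zero_or_pos with rfl | hq
      · exact zero_mul _
      · rw [Nat.choose_eq_zero_of_lt (by omega), mul_zero]
    rw [Nat.choose_eq_zero_of_lt hlt, hzero]
    simp only [dvd_zero]

end Valuation

section RowCount

open Finset

theorem card_filter_range_mul (b N : ℕ) (P : ℕ → Prop) [DecidablePred P] :
    #{x ∈ range (b * N) | P x} = ∑ s ∈ range b, #{m ∈ range N | P (b * m + s)} := by
  simp only [card_filter]
  induction N with
  | zero => simp
  | succ N ih => simp only [mul_add_one, sum_range_add, ih, sum_range_succ, sum_add_distrib]

theorem rowCount_eq_card_filter_range (k : ℕ) {n N : ℕ} (h : n < N) :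
    rowCount k n = #{m ∈ range N | ¬ k ∣ n.choose m} := by
  refine congrArg card (Subset.antisymm (filter_subset_filter _ (range_subset_range.2 h)) ?_)
  intro m hm
  obtain ⟨-, hdvd⟩ := mem_filter.1 hm
  refine mem_filter.2 ⟨mem_range.2 (Nat.lt_succ_of_le ?_), hdvd⟩
  by_contra! hlt
  exact hdvd (Nat.choose_eq_zero_of_lt hlt ▸ dvd_zero k)

theorem rowCount_zero {k : ℕ} (hk : k ≠ 1) : rowCount k 0 = 1 := by
  simp [rowCount, filter_singleton, hk]

/-- The number of `m` such that `q * C(q - 1, m)` is not divisible by `k`. For `k` a power of `p`,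
this is the number of entries not divisible by `p * k` that any fixed residue `s > r` modulo `p`
contributes to row `p * q + r`. At `q = 0` every product is `0` and the count is `0`. -/
def borrowRowCount (k q : ℕ) : ℕ :=
  #{m ∈ range (q + 1) | ¬ k ∣ q * (q - 1).choose m}

theorem borrowRowCount_one (q : ℕ) : borrowRowCount 1 q = 0 := by
  simp [borrowRowCount]

theorem borrowRowCount_eq_zero_of_dvd {k q : ℕ} (h : k ∣ q) : borrowRowCount k q = 0 :=
  card_eq_zero.2 (filter_eq_empty_iff.2 fun _ _ => not_not.2 (h.mul_right _))

theorem borrowRowCount_succ_of_coprime {k q : ℕ} (h : k.Coprime (q + 1)) :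
    borrowRowCount k (q + 1) = rowCount k q := by
  rw [rowCount_eq_card_filter_range k (show q < q + 1 + 1 by omega)]
  simp only [borrowRowCount, Nat.add_sub_cancel, h.dvd_mul_left]

variable {p : ℕ} [hp : Fact p.Prime]

theorem rowCount_pow_succ_mul_add (k q : ℕ) {r : ℕ} (hr : r < p) :
    rowCount (p ^ (k + 1)) (p * q + r) =
      (r + 1) * rowCount (p ^ (k + 1)) q + (p - (r + 1)) * borrowRowCount (p ^ k) q := by
  have row_lt : p * q + r < p * (q + 1) := by rw [mul_add_one]; gcongr
  have no_borrow : ∀ s ∈ range (r + 1),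
      #{m ∈ range (q + 1) | ¬ p ^ (k + 1) ∣ (p * q + r).choose (p * m + s)} =
        rowCount (p ^ (k + 1)) q := fun s hs => by
    simp only [pow_dvd_choose_iff_of_no_borrow _ q _ hr (Nat.le_of_lt_succ (mem_range.1 hs)),
      rowCount]
  have borrow : ∀ s ∈ Ico (r + 1) p,
      #{m ∈ range (q + 1) | ¬ p ^ (k + 1) ∣ (p * q + r).choose (p * m + s)} =
        borrowRowCount (p ^ k) q := fun s hs => by
    simp only [pow_succ_dvd_choose_iff_of_borrow k q _ (mem_Ico.1 hs).2 (mem_Ico.1 hs).1,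
      borrowRowCount]
  rw [rowCount_eq_card_filter_range _ row_lt, card_filter_range_mul,
    ← sum_range_add_sum_Ico _ (Nat.succ_le_of_lt hr), sum_congr rfl no_borrow,
    sum_congr rfl borrow, sum_const, sum_const, card_range, Nat.card_Ico, smul_eq_mul, smul_eq_mul]

theorem rowCount_prime_mul_add (q : ℕ) {r : ℕ} (hr : r < p) :
    rowCount p (p * q + r) = (r + 1) * rowCount p q := by
  simpa [borrowRowCount_one] using rowCount_pow_succ_mul_add 0 q hr

theorem mod_add_one_mul_borrowRowCount (q : ℕ) :
    (q % p + 1) * borrowRowCount p q = q % p * rowCount p q := by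
  obtain ⟨t, u, hu, rfl⟩ : ∃ t u, u < p ∧ q = p * t + u :=
    ⟨q / p, q % p, Nat.mod_lt q hp.out.pos, (Nat.div_add_mod q p).symm⟩
  rw [Nat.mul_add_mod, Nat.mod_eq_of_lt hu]
  rcases u with _ | v
  · rw [add_zero, borrowRowCount_eq_zero_of_dvd (dvd_mul_right p t), mul_zero, zero_mul]
  · have coprime : p.Coprime (p * t + v + 1) := by
      rw [hp.out.coprime_iff_not_dvd, add_assoc, Nat.dvd_add_right (dvd_mul_right p t)]
      exact Nat.not_dvd_of_pos_of_lt v.succ_pos hu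
    rw [rowCount_prime_mul_add t hu, ← add_assoc, borrowRowCount_succ_of_coprime coprime,
      rowCount_prime_mul_add t (Nat.lt_of_succ_lt hu)]
    ring

end RowCount

section Subwords

variable {b : ℕ}

theorem induction_mul_add (hb : 1 < b) {motive : ℕ → Prop} (zero : motive 0)
    (mul_add : ∀ q r, r < b → motive q → motive (b * q + r)) (n : ℕ) : motive n := by
  induction n using Nat.strong_induction_on with
  | _ n ih =>
    rcases n.eq_zero_or_pos with rfl | hn
    · exact zero
    · rw [← Nat.div_add_mod n b]
      exact mul_add _ _ (Nat.mod_lt n (by omega)) (ih _ (Nat.div_lt_self hn hb))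

theorem wordOf_mul_add {q r : ℕ} (hr : r < b) (h : 1 < b) (hne : r ≠ 0 ∨ q ≠ 0) :
    wordOf b (b * q + r) = wordOf b q ++ [r] := by
  rw [wordOf, wordOf, add_comm, Nat.digits_add b h r q hr hne, List.reverse_cons]

theorem append_singleton_suffix_append_singleton_iff {α : Type*} {l₁ l₂ : List α} {x y : α} :
    l₁ ++ [x] <:+ l₂ ++ [y] ↔ l₁ <:+ l₂ ∧ x = y := by
  simp only [List.suffix_concat_iff, List.append_eq_nil_iff, List.cons_ne_nil, and_false, false_or,
    List.append_singleton_inj]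
  exact ⟨fun ⟨_, ⟨h, hxy⟩, hl⟩ => ⟨h ▸ hl, hxy⟩, fun ⟨hl, hxy⟩ => ⟨_, ⟨rfl, hxy⟩, hl⟩⟩

theorem subwordCount_eq_zero_of_length_lt {n : ℕ} {w : List ℕ}
    (h : (wordOf b n).length < w.length) : subwordCount b n w = 0 := by
  rw [subwordCount, Nat.sub_eq_zero_of_le h, Finset.range_zero, Finset.filter_empty,
    Finset.card_empty]

theorem subwordCount_zero (b : ℕ) {w : List ℕ} (hw : w ≠ []) : subwordCount b 0 w = 0 :=
  subwordCount_eq_zero_of_length_lt (by simpa [wordOf] using List.length_pos_iff.2 hw)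

theorem subwordCount_mul_add {q r : ℕ} (hr : r < b) (h : 1 < b) (hne : r ≠ 0 ∨ q ≠ 0)
    {w : List ℕ} (hw : w ≠ []) :
    subwordCount b (b * q + r) w =
      subwordCount b q w + if w <:+ wordOf b q ++ [r] then 1 else 0 := by
  have length_pos : 0 < w.length := List.length_pos_iff.2 hw
  rw [subwordCount, subwordCount, wordOf_mul_add hr h hne]
  generalize wordOf b q = W
  have length_append : (W ++ [r]).length = W.length + 1 := by simp
  rcases le_or_gt w.length (W.length + 1) with hle | hlt
  · rw [length_append, Nat.succ_sub hle, Finset.card_filter, Finset.card_filter,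
      Finset.sum_range_succ]
    congr 1
    · refine Finset.sum_congr rfl fun s hs => ?_
      have window_le : s + w.length ≤ W.length := by
        have := Finset.mem_range.1 hs
        omega
      rw [List.drop_append_of_le_length (by omega), List.take_append_of_le_length]
      rw [List.length_drop]
      omega
    · rw [List.take_of_length_le (by rw [List.length_drop, length_append]; omega),
        ← length_append]
      simp only [List.suffix_iff_eq_drop, eq_comm]
  · have not_suffix : ¬ w <:+ W ++ [r] := fun hsuff => by
      have := hsuff.length_le
      omega
    simp [not_suffix, show W.length + 1 + 1 - w.length = 0 by omega,
      show W.length + 1 - w.length = 0 by omega]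

theorem subwordCount_singleton_mul_add {q r a : ℕ} (hr : r < b) (h : 1 < b)
    (hne : r ≠ 0 ∨ q ≠ 0) :
    subwordCount b (b * q + r) [a] = subwordCount b q [a] + if a = r then 1 else 0 := by
  have suffix_iff : [a] <:+ wordOf b q ++ [r] ↔ a = r :=
    append_singleton_suffix_append_singleton_iff.trans (and_iff_right List.nil_suffix)
  rw [subwordCount_mul_add hr h hne (List.cons_ne_nil a [])]
  simp only [suffix_iff]

theorem subwordCount_pair_of_lt {r : ℕ} (hr : r < b) (h : 1 < b) (a c : ℕ) :
    subwordCount b r [a, c] = 0 := by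
  refine subwordCount_eq_zero_of_length_lt (Nat.lt_succ_of_le ?_)
  rw [wordOf, List.length_reverse, List.length_singleton, Nat.digits_length_le_iff h, pow_one]
  exact hr

theorem subwordCount_pair_mul_add {q r a c : ℕ} (hr : r < b) (h : 1 < b) (hq : q ≠ 0) :
    subwordCount b (b * q + r) [a, c] =
      subwordCount b q [a, c] + if a = q % b ∧ c = r then 1 else 0 := by
  have wordOf_q : wordOf b q = wordOf b (q / b) ++ [q % b] := by
    rw [wordOf, wordOf, Nat.digits_def' h (Nat.pos_of_ne_zero hq), List.reverse_cons]
  have suffix_iff : [a, c] <:+ wordOf b q ++ [r] ↔ a = q % b ∧ c = r :=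
    calc [a, c] <:+ wordOf b q ++ [r]
      _ ↔ [a] <:+ wordOf b q ∧ c = r := append_singleton_suffix_append_singleton_iff (l₁ := [a])
      _ ↔ a = q % b ∧ c = r := by
        rw [wordOf_q, show [a] = [] ++ [a] from rfl, append_singleton_suffix_append_singleton_iff,
          and_iff_right List.nil_suffix]
  rw [subwordCount_mul_add hr h (Or.inr hq) (List.cons_ne_nil a [c])]
  simp only [suffix_iff]

end Subwords

section Formula

open Finset

/-- The product of `digit + 1` over the base-`b` digits of `n`, grouped by the value of the digit.
For `b` prime it is Fine's formula for the number of nonzero entries of row `n` modulo `b`. -/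
def digitSuccProd (b n : ℕ) : ℕ :=
  ∏ a ∈ range b, (a + 1) ^ subwordCount b n [a]

/-- The sum of the weights `c(w)` over all occurrences of two-letter subwords `w` in the base-`b`
digit string of `n`, grouped by the subword. -/
def pairWeightSum (b n : ℕ) : ℚ :=
  ∑ a ∈ range b, ∑ c ∈ range b, cword b [a, c] * subwordCount b n [a, c]

variable {b : ℕ}

theorem cword_pair (b a c : ℕ) :
    cword b [a, c] = (a : ℚ) / (a + 1) * ((b - c - 1) / (c + 1)) := by
  simp [cword]

theorem digitSuccProd_zero (b : ℕ) : digitSuccProd b 0 = 1 := by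
  simp [digitSuccProd, subwordCount_zero]

theorem pairWeightSum_zero (b : ℕ) : pairWeightSum b 0 = 0 := by
  simp [pairWeightSum, subwordCount_zero]

theorem digitSuccProd_mul_add {q r : ℕ} (hr : r < b) (h : 1 < b) :
    digitSuccProd b (b * q + r) = (r + 1) * digitSuccProd b q := by
  by_cases hne : r ≠ 0 ∨ q ≠ 0
  · simp only [digitSuccProd, subwordCount_singleton_mul_add hr h hne, pow_add, prod_mul_distrib,
      pow_ite, pow_one, pow_zero, prod_ite_eq', mem_range, hr, if_true]
    exact mul_comm _ _
  · obtain ⟨rfl, rfl⟩ : r = 0 ∧ q = 0 := by tauto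
    simp

theorem pairWeightSum_mul_add {q r : ℕ} (hr : r < b) (h : 1 < b) :
    pairWeightSum b (b * q + r) = pairWeightSum b q + cword b [q % b, r] := by
  rcases eq_or_ne q 0 with rfl | hq
  · simp [pairWeightSum, subwordCount_pair_of_lt hr h, subwordCount_zero, cword_pair]
  · have hmod : q % b < b := Nat.mod_lt q (by omega)
    simp [pairWeightSum, subwordCount_pair_mul_add hr h hq, mul_add, sum_add_distrib, ite_and,
      hr, hmod]

variable {p : ℕ} [hp : Fact p.Prime]

theorem rowCount_prime_eq_digitSuccProd (n : ℕ) : rowCount p n = digitSuccProd p n := by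
  induction n using induction_mul_add hp.out.one_lt with
  | zero => rw [rowCount_zero hp.out.ne_one, digitSuccProd_zero]
  | mul_add q r hr ih =>
    rw [rowCount_prime_mul_add q hr, digitSuccProd_mul_add hr hp.out.one_lt, ih]

theorem borrowRowCount_prime_eq (q : ℕ) :
    (borrowRowCount p q : ℚ) = (q % p : ℕ) / ((q % p : ℕ) + 1) * digitSuccProd p q := by
  have h : (((q % p : ℕ) : ℚ) + 1) * borrowRowCount p q = (q % p : ℕ) * digitSuccProd p q := by
    rw [← rowCount_prime_eq_digitSuccProd]
    exact_mod_cast mod_add_one_mul_borrowRowCount q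
  field_simp
  linarith

theorem stmt14_general (n : ℕ) :
    (rowCount (p ^ 2) n : ℚ) = digitSuccProd p n * (1 + pairWeightSum p n) := by
  induction n using induction_mul_add hp.out.one_lt with
  | zero =>
    simp [rowCount_zero, digitSuccProd_zero, pairWeightSum_zero, hp.out.ne_one]
  | mul_add q r hr ih =>
    have rec_row : (rowCount (p ^ 2) (p * q + r) : ℚ) =
        (r + 1) * rowCount (p ^ 2) q + (p - (r + 1)) * borrowRowCount p q := by
      rw [rowCount_pow_succ_mul_add 1 q hr, pow_one]
      push_cast [Nat.succ_le_of_lt hr]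
      ring
    rw [rec_row, ih, borrowRowCount_prime_eq, digitSuccProd_mul_add hr hp.out.one_lt,
      pairWeightSum_mul_add hr hp.out.one_lt, cword_pair]
    push_cast
    field_simp
    ring

end Formula

/-- For every `n ≥ 0`, as an identity in the rational numbers:
`a_9(n) = 2^{|n|_1} · 3^{|n|_2} · (1 + |n|_{10} + (1/4)|n|_{11} + (4/3)|n|_{20} + (1/3)|n|_{21})`,
subword counts taken in base 3. -/
theorem stmt14 (n : ℕ) :
    (rowCount 9 n : ℚ) =
      2 ^ subwordCount 3 n [1] * 3 ^ subwordCount 3 n [2] *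
        (1 + (subwordCount 3 n [1, 0] : ℚ) + (1 / 4) * (subwordCount 3 n [1, 1] : ℚ) +
          (4 / 3) * (subwordCount 3 n [2, 0] : ℚ) + (1 / 3) * (subwordCount 3 n [2, 1] : ℚ)) := by
  have general := stmt14_general (p := 3) n
  norm_num [digitSuccProd, pairWeightSum, Finset.prod_range_succ, Finset.sum_range_succ,
    cword_pair] at general ⊢
  linear_combination general
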